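/- For each integer n ≥ 2 define I_n(x) = ∫₀^x sin^{n−1}(s) ds, W_{n−1} = ∫₀^{π/2} sin^{n−1}(s) ds, and V_n = (2/(2W_{n−1})²) · ∫₀^π (I_n(u)²/sin^{n−1}(u)) · ( ∫_u^π (2W_{n−1} − I_n(s))² / sin^{n−1}(s) ds ) du. Then (n−1)²·V_n converges to π²/6 as n → ∞. -/

import Mathlib

open Real Filter

section Aux
open Polynomial MeasureTheory

lemma geg_exists (k : ℕ) : ∀ m : ℕ, ∃ P : ℝ[X], P.degree = k ∧
    (1 - X ^ 2) * derivative (derivative P) - C ((m : ℝ) + 1) * X * derivative P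
      + C ((k : ℝ) * (k + m)) * P = 0 := by
  induction k with
  | zero => intro m; exact ⟨1, by simp, by simp⟩
  | succ k ih =>
    intro m
    obtain ⟨Q, hd, hQ⟩ := ih (m + 2)
    set P : ℝ[X] := (1 - X ^ 2) * derivative Q - C ((m : ℝ) + 1) * X * Q with hPdef
    have hP' : derivative P = - (C (((k : ℝ) + 1) * (k + 1 + m)) * Q) := by
      have : derivative P = ((1 - X ^ 2) * derivative (derivative Q)
          - C (((m + 2 : ℕ) : ℝ) + 1) * X * derivative Q + C ((k : ℝ) * (k + (m + 2 : ℕ))) * Q)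
          - C (((k : ℝ) + 1) * (k + 1 + m)) * Q := by
        rw [hPdef]
        simp only [derivative_sub, derivative_mul, derivative_C, derivative_X, derivative_one,
          derivative_pow]
        simp only [C_mul, C_add, map_natCast, map_one]
        push_cast
        ring
      rw [this, hQ]; ring
    have hc : (((k : ℝ) + 1) * (k + 1 + m)) ≠ 0 := by positivity
    refine ⟨P, ?_, ?_⟩
    · have h1 : (derivative P).degree = k := by
        rw [hP', degree_neg, degree_C_mul hc, hd]
      have h0 : P.natDegree ≠ 0 := by
        intro h
        rw [natDegree_eq_zero] at h
        obtain ⟨c, hc'⟩ := h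
        rw [← hc'] at h1
        simp at h1
      rw [degree_derivative h0] at h1
      have h2 : P.natDegree - 1 = k := by exact_mod_cast h1
      rw [degree_eq_natDegree (by rintro h; simp [h] at h0)]
      have : P.natDegree = k + 1 := by omega
      rw [this]
    · rw [hP']
      simp only [derivative_neg, derivative_mul, derivative_C]
      rw [hPdef]
      push_cast
      ring

variable (m : ℕ) (P : ℕ → ℝ[X])

/-- The polynomial family is a family of eigenfunctions. -/
def GegEq : Prop := ∀ k : ℕ, (P k).degree = k ∧
    (1 - X ^ 2) * derivative (derivative (P k)) - C ((m : ℝ) + 1) * X * derivative (P k)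
      + C ((k : ℝ) * (k + m)) * P k = 0

lemma geg_hasDeriv (h : GegEq m P) (k : ℕ) (u : ℝ) :
    HasDerivAt (fun u => sin u ^ (m + 1) * (derivative (P k)).eval (cos u))
      ((k : ℝ) * (k + m) * (sin u ^ m * (P k).eval (cos u))) u := by
  have e := congrArg (fun p => eval (cos u) p) (h k).2
  simp only [eval_add, eval_sub, eval_mul, eval_pow, eval_X, eval_C, eval_one, eval_zero] at e
  have h1 := ((hasDerivAt_sin u).pow (m + 1)).mul
    (((derivative (P k)).hasDerivAt (cos u)).comp u (hasDerivAt_cos u))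
  refine h1.congr_deriv ?_
  have hs : sin u ^ 2 = 1 - cos u ^ 2 := by rw [sin_sq]
  simp only [Function.comp, Pi.pow_apply, Nat.add_sub_cancel]
  push_cast
  linear_combination -(sin u ^ m) * e - sin u ^ m * eval (cos u) (derivative (derivative (P k))) * hs

/-- unnormalised coefficient -/
noncomputable def gJ (k : ℕ) (s : ℝ) : ℝ := ∫ u in (0:ℝ)..s, sin u ^ m * (P k).eval (cos u)

/-- squared norm -/
noncomputable def gH (k : ℕ) : ℝ := ∫ u in (0:ℝ)..π, sin u ^ m * (P k).eval (cos u) ^ 2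

lemma poly_cos_cont (p : ℝ[X]) : Continuous (fun u => p.eval (cos u)) :=
  p.continuous.comp continuous_cos

lemma gJ_eq (h : GegEq m P) (k : ℕ) (s : ℝ) :
    (k : ℝ) * (k + m) * gJ m P k s = sin s ^ (m + 1) * (derivative (P k)).eval (cos s) := by
  have := intervalIntegral.integral_eq_sub_of_hasDerivAt (a := 0) (b := s)
    (fun u _ => geg_hasDeriv m P h k u)
    (by
      apply Continuous.intervalIntegrable
      have := poly_cos_cont (P k)
      fun_prop)
  rw [intervalIntegral.integral_const_mul] at this
  unfold gJ
  rw [this]; simp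

lemma geg_parts (h : GegEq m P) (k : ℕ) (R : ℝ[X]) :
    ∫ u in (0:ℝ)..π, sin u ^ (m + 2) * ((derivative (P k)).eval (cos u)
        * (derivative R).eval (cos u))
      = (k : ℝ) * (k + m) * ∫ u in (0:ℝ)..π, sin u ^ m * ((P k).eval (cos u) * R.eval (cos u)) := by
  have c1 := poly_cos_cont (P k)
  have c2 := poly_cos_cont (derivative (P k))
  have c3 := poly_cos_cont R
  have c4 := poly_cos_cont (derivative R)
  have := intervalIntegral.integral_eq_sub_of_hasDerivAt (a := 0) (b := π)
    (f := fun u => sin u ^ (m + 1) * (derivative (P k)).eval (cos u) * R.eval (cos u))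
    (f' := fun u => (k : ℝ) * (k + m) * (sin u ^ m * ((P k).eval (cos u) * R.eval (cos u)))
      - sin u ^ (m + 2) * ((derivative (P k)).eval (cos u) * (derivative R).eval (cos u)))
    (fun u _ => by
      refine ((geg_hasDeriv m P h k u).mul
        ((R.hasDerivAt (cos u)).comp u (hasDerivAt_cos u))).congr_deriv ?_
      simp only [Function.comp]
      ring)
    (by
      apply Continuous.intervalIntegrable
      fun_prop)
  rw [intervalIntegral.integral_sub, intervalIntegral.integral_const_mul] at this
  · simp at this
    linarith
  · apply Continuous.intervalIntegrable
    fun_prop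
  · apply Continuous.intervalIntegrable
    fun_prop

lemma geg_orth (h : GegEq m P) {j k : ℕ} (hjk : j ≠ k) :
    ∫ u in (0:ℝ)..π, sin u ^ m * ((P j).eval (cos u) * (P k).eval (cos u)) = 0 := by
  have h1 := geg_parts m P h j (P k)
  have h2 := geg_parts m P h k (P j)
  simp_rw [mul_comm (eval _ (derivative (P k)))] at h2
  simp_rw [mul_comm (eval _ ((P k)))] at h2
  rw [h1] at h2
  have h3 : ((j : ℝ) - k) * ((j + k + m) * ∫ u in (0:ℝ)..π,
    sin u ^ m * ((P j).eval (cos u) * (P k).eval (cos u))) = 0 := by linear_combination h2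
  rcases mul_eq_zero.1 h3 with h4 | h4
  · exact absurd (by exact_mod_cast sub_eq_zero.1 h4) hjk
  · rcases mul_eq_zero.1 h4 with h5 | h5
    · exfalso
      have : j + k + m = 0 := by exact_mod_cast h5
      omega
    · exact h5

lemma gH_pos (h : GegEq m P) (k : ℕ) : 0 < gH m P k := by
  have hne : P k ≠ 0 := by
    intro h0
    have := (h k).1
    rw [h0] at this
    simp at this
  have : ∃ x ∈ Set.Ioo (-1:ℝ) 1, (P k).eval x ≠ 0 := by
    by_contra! hc
    apply hne
    apply Polynomial.eq_zero_of_infinite_isRoot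
    exact (Set.Ioo_infinite (by norm_num : (-1:ℝ) < 1)).mono hc
  obtain ⟨x, hx, hx0⟩ := this
  have hcos : cos (arccos x) = x := cos_arccos hx.1.le hx.2.le
  have hpos : 0 < arccos x := arccos_pos.2 hx.2
  have hlt : arccos x < π := by
    rcases (arccos_le_pi x).lt_or_eq with h | h
    · exact h
    · rw [arccos_eq_pi] at h; linarith [hx.1]
  have c1 := poly_cos_cont (P k)
  apply intervalIntegral.integral_pos pi_pos
  · fun_prop
  · intro u hu
    have := sin_nonneg_of_nonneg_of_le_pi hu.1.le hu.2
    positivity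
  · refine ⟨arccos x, ⟨hpos.le, hlt.le⟩, ?_⟩
    have := sin_pos_of_pos_of_lt_pi hpos hlt
    rw [hcos]
    positivity

end Aux
section Hilb
open Polynomial MeasureTheory

/-- cosine as a map to `[-1,1]` -/
noncomputable def gMap (u : ℝ) : Set.Icc (-1:ℝ) 1 := ⟨cos u, neg_one_le_cos u, cos_le_one u⟩

lemma gMap_cont : Continuous gMap := by
  unfold gMap
  fun_prop

/-- base measure -/
noncomputable def gMu (m : ℕ) : Measure ℝ :=
  (volume.restrict (Set.Ioc 0 π)).withDensity (fun u => ENNReal.ofReal (sin u ^ m))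

/-- Gegenbauer measure -/
noncomputable def gNu (m : ℕ) : Measure (Set.Icc (-1:ℝ) 1) := (gMu m).map gMap

instance gMu_fin (m : ℕ) : IsFiniteMeasure (gMu m) := by
  apply isFiniteMeasure_withDensity_ofReal
  have : IntegrableOn (fun u => sin u ^ m) (Set.Ioc 0 π) volume :=
    (Continuous.integrableOn_Icc (by fun_prop)).mono_set Set.Ioc_subset_Icc_self
  exact this.2

instance gNu_fin (m : ℕ) : IsFiniteMeasure (gNu m) := by
  unfold gNu
  infer_instance

lemma gNu_integral (m : ℕ) (f : Set.Icc (-1:ℝ) 1 → ℝ) (hf : StronglyMeasurable f) :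
    ∫ x, f x ∂(gNu m) = ∫ u in (0:ℝ)..π, sin u ^ m * f (gMap u) := by
  unfold gNu
  rw [integral_map gMap_cont.measurable.aemeasurable hf.aestronglyMeasurable]
  unfold gMu
  rw [integral_withDensity_eq_integral_toReal_smul (by fun_prop) (by simp)]
  rw [intervalIntegral.integral_of_le pi_pos.le]
  apply setIntegral_congr_fun measurableSet_Ioc
  intro u hu
  have := sin_nonneg_of_nonneg_of_le_pi hu.1.le hu.2
  simp only [smul_eq_mul]
  rw [ENNReal.toReal_ofReal (by positivity)]

/-- cap -/
def gS (s : ℝ) : Set (Set.Icc (-1:ℝ) 1) := {x | cos s < x.1}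

lemma gS_meas (s : ℝ) : MeasurableSet (gS s) :=
  measurableSet_lt measurable_const measurable_subtype_coe

lemma gNu_setIntegral (m : ℕ) (f : Set.Icc (-1:ℝ) 1 → ℝ) (hf : StronglyMeasurable f)
    {s : ℝ} (hs : s ∈ Set.Icc 0 π) :
    ∫ x in gS s, f x ∂(gNu m) = ∫ u in (0:ℝ)..s, sin u ^ m * f (gMap u) := by
  rw [← integral_indicator (gS_meas s), gNu_integral m _ (hf.indicator (gS_meas s))]
  have : ∀ u ∈ Set.Ioc 0 π, sin u ^ m * (gS s).indicator f (gMap u)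
      = (Set.Iio s).indicator (fun u => sin u ^ m * f (gMap u)) u := by
    intro u hu
    have : gMap u ∈ gS s ↔ u ∈ Set.Iio s := by
      simp only [gMap, gS, Set.mem_ofPred_eq, Set.mem_Iio]
      exact strictAntiOn_cos.lt_iff_gt hs ⟨hu.1.le, hu.2⟩
    by_cases h : u ∈ Set.Iio s
    · rw [Set.indicator_of_mem h, Set.indicator_of_mem (this.2 h)]
    · rw [Set.indicator_of_notMem h, Set.indicator_of_notMem (fun h' => h (this.1 h'))]; simp
  rw [intervalIntegral.integral_of_le pi_pos.le, setIntegral_congr_fun measurableSet_Ioc this,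
    integral_indicator measurableSet_Iio, Measure.restrict_restrict measurableSet_Iio,
    intervalIntegral.integral_of_le hs.1, integral_Ioc_eq_integral_Ioo]
  congr 2
  ext u
  simp only [Set.mem_inter_iff, Set.mem_Iio, Set.mem_Ioc, Set.mem_Ioo]
  constructor
  · rintro ⟨a, b, c⟩; exact ⟨b, a⟩
  · rintro ⟨a, b⟩; exact ⟨b, a, by linarith [hs.2]⟩

/-- polynomial in L2 -/
noncomputable def gE (m : ℕ) (p : ℝ[X]) : Lp ℝ 2 (gNu m) :=
  ContinuousMap.toLp 2 (gNu m) ℝ (p.toContinuousMapOn (Set.Icc (-1:ℝ) 1))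

lemma gE_inner (m : ℕ) (p q : ℝ[X]) : inner ℝ (gE m p) (gE m q) =
    ∫ u in (0:ℝ)..π, sin u ^ m * (p.eval (cos u) * q.eval (cos u)) := by
  unfold gE
  rw [ContinuousMap.inner_toLp, gNu_integral]
  · simp [gMap, mul_comm]
  · apply Continuous.stronglyMeasurable
    simp only [conj_trivial]
    fun_prop

/-- cap indicator in L2 -/
noncomputable def gChi (m : ℕ) (s : ℝ) : Lp ℝ 2 (gNu m) :=
  indicatorConstLp 2 (gS_meas s) (measure_ne_top (gNu m) _) (1:ℝ)

lemma gChi_inner (m : ℕ) {s : ℝ} (hs : s ∈ Set.Icc 0 π) (p : ℝ[X]) :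
    inner ℝ (gChi m s) (gE m p) = ∫ u in (0:ℝ)..s, sin u ^ m * p.eval (cos u) := by
  unfold gChi
  rw [L2.inner_indicatorConstLp_one]
  have : ∫ x in gS s, (gE m p) x ∂(gNu m) =
      ∫ x in gS s, (p.toContinuousMapOn (Set.Icc (-1:ℝ) 1)) x ∂(gNu m) := by
    apply setIntegral_congr_ae (gS_meas s)
    filter_upwards [ContinuousMap.coeFn_toLp (p := 2) (𝕜 := ℝ) (gNu m)
      (p.toContinuousMapOn (Set.Icc (-1:ℝ) 1))] with x hx _
    exact hx
  rw [this, gNu_setIntegral m _ (ContinuousMap.continuous _).stronglyMeasurable hs]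
  simp [gMap]

lemma gChi_chi (m : ℕ) {s t : ℝ} (hs : s ∈ Set.Icc 0 π) (ht : t ∈ Set.Icc 0 π) :
    inner ℝ (gChi m s) (gChi m t) = ∫ u in (0:ℝ)..(min s t), sin u ^ m := by
  have key : gS s ∩ gS t = gS (min s t) := by
    rcases le_total s t with h | h
    · rw [min_eq_left h]
      apply Set.inter_eq_left.2
      intro x hx
      exact (cos_le_cos_of_nonneg_of_le_pi hs.1 ht.2 h).trans_lt hx
    · rw [min_eq_right h]
      apply Set.inter_eq_right.2
      intro x hx
      exact (cos_le_cos_of_nonneg_of_le_pi ht.1 hs.2 h).trans_lt hx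
  have hmin : min s t ∈ Set.Icc 0 π := ⟨le_min hs.1 ht.1, (min_le_left _ _).trans hs.2⟩
  unfold gChi
  rw [L2.real_inner_indicatorConstLp_one_indicatorConstLp_one, key]
  have := gNu_setIntegral m (fun _ => 1) stronglyMeasurable_const hmin
  simpa using this

lemma gE_span (m : ℕ) (P : ℕ → ℝ[X]) (h : GegEq m P) :
    ⊤ ≤ (Submodule.span ℝ (Set.range (fun k => gE m (P k)))).topologicalClosure := by
  let S : Polynomial.Sequence ℝ := ⟨P, fun k => (h k).1⟩
  have hS : Submodule.span ℝ (Set.range P) = ⊤ :=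
    S.span (fun i => isUnit_iff_ne_zero.2 (leadingCoeff_ne_zero.2 (S.ne_zero i)))
  let L : ℝ[X] →ₗ[ℝ] Lp ℝ 2 (gNu m) :=
    (ContinuousMap.toLp 2 (gNu m) ℝ).toLinearMap ∘ₗ
      (Polynomial.toContinuousMapOnAlgHom (Set.Icc (-1:ℝ) 1)).toLinearMap
  have hL : Submodule.span ℝ (Set.range (fun k => gE m (P k))) = LinearMap.range L := by
    rw [LinearMap.range_eq_map, ← hS, Submodule.map_span, ← Set.range_comp]
    rfl
  rw [hL]
  have hr : LinearMap.range L = (Subalgebra.toSubmodule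
      (polynomialFunctions (Set.Icc (-1:ℝ) 1))).map
      (ContinuousMap.toLp 2 (gNu m) ℝ).toLinearMap := by
    rw [LinearMap.range_comp]
    congr 1
    ext x
    rw [← SetLike.mem_coe, ← SetLike.mem_coe]
    simp [polynomialFunctions_coe]
  rw [hr]
  have hd := polynomialFunctions_closure_eq_top (-1:ℝ) 1
  have := (ContinuousMap.toLp_denseRange ℝ (gNu m) ℝ (p := 2)
    (by simp)).topologicalClosure_map_submodule (s := Subalgebra.toSubmodule
      (polynomialFunctions (Set.Icc (-1:ℝ) 1))) (by
      apply SetLike.coe_injective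
      exact congrArg (fun A : Subalgebra ℝ C(Set.Icc (-1:ℝ) 1, ℝ) => (A : Set C(Set.Icc (-1:ℝ) 1, ℝ))) hd)
  exact this.ge

lemma geg_parseval (m : ℕ) (P : ℕ → ℝ[X]) (h : GegEq m P) {s t : ℝ}
    (hs : s ∈ Set.Icc 0 π) (ht : t ∈ Set.Icc 0 π) :
    HasSum (fun k => gJ m P k s * gJ m P k t / gH m P k) (∫ u in (0:ℝ)..(min s t), sin u ^ m) := by
  have hH : ∀ k, inner ℝ (gE m (P k)) (gE m (P k)) = gH m P k := by
    intro k
    rw [gE_inner]; simp only [gH, pow_two]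
  let v : ℕ → Lp ℝ 2 (gNu m) := fun k => (√(gH m P k))⁻¹ • gE m (P k)
  have hv : Orthonormal ℝ v := by
    rw [orthonormal_iff_ite]
    intro i j
    simp only [v, inner_smul_left, inner_smul_right, conj_trivial]
    split_ifs with hij
    · subst hij
      rw [hH]
      have := gH_pos m P h i
      rw [← mul_assoc, ← mul_inv, mul_self_sqrt this.le, inv_mul_cancel₀ this.ne']
    · rw [gE_inner, geg_orth m P h hij]; simp
  have hspan : ⊤ ≤ (Submodule.span ℝ (Set.range v)).topologicalClosure := by
    refine (gE_span m P h).trans (Submodule.topologicalClosure_mono ?_)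
    rw [Submodule.span_le]
    rintro _ ⟨k, rfl⟩
    have : gE m (P k) = √(gH m P k) • v k := by
      have := gH_pos m P h k
      simp only [v]
      rw [smul_smul, mul_inv_cancel₀ (by positivity), one_smul]
    simp only
    rw [this]
    exact Submodule.smul_mem _ _ (Submodule.subset_span ⟨k, rfl⟩)
  have := (HilbertBasis.mk hv hspan).hasSum_inner_mul_inner (gChi m s) (gChi m t)
  rw [gChi_chi m hs ht] at this
  refine this.congr_fun (fun k => ?_)
  rw [HilbertBasis.coe_mk, real_inner_comm (gChi m t)]
  simp only [v, inner_smul_right]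
  rw [gChi_inner m hs, gChi_inner m ht]
  have h1 := gH_pos m P h k
  have h2 : √(gH m P k) * √(gH m P k) = gH m P k := mul_self_sqrt h1.le
  unfold gJ
  rw [div_eq_mul_inv]
  conv_lhs => rw [← h2]
  rw [mul_inv]
  ring

end Hilb
section Main
open Polynomial MeasureTheory

/-- incomplete sine integral -/
noncomputable def gI (m : ℕ) (s : ℝ) : ℝ := ∫ u in (0:ℝ)..s, sin u ^ m

/-- Green kernel -/
noncomputable def gG (m : ℕ) (s t : ℝ) : ℝ := gI m (min s t) - gI m s * gI m t / gI m π

lemma sinpow_ii (m : ℕ) (a b : ℝ) : IntervalIntegrable (fun u => sin u ^ m) volume a b :=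
  Continuous.intervalIntegrable (by fun_prop) _ _

lemma gI_cont (m : ℕ) : Continuous (gI m) :=
  intervalIntegral.continuous_primitive (fun a b => sinpow_ii m a b) 0

lemma gI_pi_pos (m : ℕ) : 0 < gI m π := by
  apply intervalIntegral.intervalIntegral_pos_of_pos_on (sinpow_ii m _ _) _ pi_pos
  intro u hu
  have := sin_pos_of_pos_of_lt_pi hu.1 hu.2
  positivity

lemma gI_sub (m : ℕ) (s t : ℝ) : gI m t - gI m s = ∫ u in s..t, sin u ^ m :=
  intervalIntegral.integral_interval_sub_left (sinpow_ii m _ _) (sinpow_ii m _ _)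

lemma gI_mono (m : ℕ) {s t : ℝ} (h0 : 0 ≤ s) (hst : s ≤ t) (ht : t ≤ π) : gI m s ≤ gI m t := by
  rw [← sub_nonneg, gI_sub]
  apply intervalIntegral.integral_nonneg hst
  intro u hu
  have := sin_nonneg_of_nonneg_of_le_pi (h0.trans hu.1) (hu.2.trans ht)
  positivity

lemma gI_nonneg (m : ℕ) {s : ℝ} (h0 : 0 ≤ s) (ht : s ≤ π) : 0 ≤ gI m s := by
  have := gI_mono m le_rfl h0 ht
  simpa [gI] using this

lemma gI_half (m : ℕ) : gI m π = 2 * gI m (π / 2) := by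
  have h := gI_sub m (π / 2) π
  have h2 : ∫ u in (π / 2)..π, sin u ^ m = ∫ u in (0:ℝ)..(π / 2), sin u ^ m := by
    have := intervalIntegral.integral_comp_sub_left (a := 0) (b := π / 2)
      (fun u => sin u ^ m) π
    simp only [sin_pi_sub, sub_zero] at this
    rw [this]
    congr 1
    ring
  rw [h2] at h
  change gI m π - gI m (π / 2) = gI m (π / 2) at h
  linarith

lemma gG_eq (m : ℕ) {s t : ℝ} (hst : s ≤ t) :
    gG m s t = gI m s * (gI m π - gI m t) / gI m π := by
  have := (gI_pi_pos m).ne'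
  rw [gG, min_eq_left hst]
  field_simp

lemma gG_comm (m : ℕ) (s t : ℝ) : gG m s t = gG m t s := by
  rw [gG, gG, min_comm, mul_comm (gI m s)]

lemma gG_diag (m : ℕ) {s : ℝ} (hs : s ∈ Set.Ioo 0 π) : gG m s s ≤ π * sin s ^ m := by
  rw [gG_eq m le_rfl]
  have hp := gI_pi_pos m
  have h0 := gI_nonneg m hs.1.le hs.2.le
  have h1 := gI_mono m hs.1.le hs.2.le le_rfl
  have hsp := sin_pos_of_pos_of_lt_pi hs.1 hs.2
  rcases le_total s (π / 2) with h | h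
  · have a : gI m s * (gI m π - gI m s) / gI m π ≤ gI m s := by
      rw [div_le_iff₀ hp]
      nlinarith
    have b : gI m s ≤ ∫ u in (0:ℝ)..s, sin s ^ m := by
      apply intervalIntegral.integral_mono_on hs.1.le (sinpow_ii m _ _) (by simp)
      intro u hu
      have := sin_nonneg_of_nonneg_of_le_pi hu.1 (hu.2.trans hs.2.le)
      have := sin_le_sin_of_le_of_le_pi_div_two (by linarith [hu.1, pi_pos]) h hu.2
      gcongr
    simp at b
    have : s * sin s ^ m ≤ π * sin s ^ m := by
      have := hs.2.le
      gcongr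
    linarith
  · have a : gI m s * (gI m π - gI m s) / gI m π ≤ gI m π - gI m s := by
      rw [div_le_iff₀ hp]
      nlinarith
    have b : gI m π - gI m s ≤ ∫ u in s..π, sin s ^ m := by
      rw [gI_sub]
      apply intervalIntegral.integral_mono_on hs.2.le (sinpow_ii m _ _) (by simp)
      intro u hu
      have := sin_nonneg_of_nonneg_of_le_pi (hs.1.le.trans hu.1) hu.2
      have := sin_le_sin_of_le_of_le_pi_div_two (x := π - u) (y := π - s)
        (by linarith [hu.2, pi_pos]) (by linarith) (by linarith [hu.1])
      rw [sin_pi_sub, sin_pi_sub] at this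
      gcongr
    simp at b
    have : (π - s) * sin s ^ m ≤ π * sin s ^ m := by
      have := hs.1.le
      gcongr
      linarith
    linarith

variable (m : ℕ) (P : ℕ → ℝ[X])

lemma gG_hasSum (h : GegEq m P) {s t : ℝ} (hs : s ∈ Set.Icc 0 π) (ht : t ∈ Set.Icc 0 π) :
    HasSum (fun k => gJ m P (k + 1) s * gJ m P (k + 1) t / gH m P (k + 1)) (gG m s t) := by
  have h1 := geg_parseval m P h hs ht
  rw [← hasSum_nat_add_iff' 1] at h1
  suffices hval : gG m s t = (∫ (u : ℝ) in 0..min s t, sin u ^ m)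
      - ∑ i ∈ Finset.range 1, gJ m P i s * gJ m P i t / gH m P i by
    rw [hval]
    exact h1
  obtain ⟨c, hc⟩ : ∃ c, P 0 = C c := by
    have : (P 0).natDegree = 0 := natDegree_eq_of_degree_eq_some (h 0).1
    obtain ⟨c, hc⟩ := natDegree_eq_zero.1 this
    exact ⟨c, hc.symm⟩
  have hH := gH_pos m P h 0
  have e1 : ∀ s, gJ m P 0 s = gI m s * c := by
    intro s
    simp [gJ, gI, hc]
  have e2 : gH m P 0 = gI m π * c ^ 2 := by
    simp [gH, gI, hc]
  rw [e2] at hH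
  have hc0 : c ≠ 0 := by rintro rfl; simp at hH
  have := (gI_pi_pos m).ne'
  rw [Finset.sum_range_one]
  rw [e1, e1, e2, gG]
  change gI m (min s t) - _ = gI m (min s t) - _
  congr 1
  field_simp

/-- eigenvalue -/
noncomputable def gL (k : ℕ) : ℝ := (k : ℝ) * (k + m)

lemma gL_pos (k : ℕ) : 0 < gL m (k + 1) := by
  unfold gL
  positivity

/-- dual eigenfunctions -/
noncomputable def gB (k : ℕ) (s : ℝ) : ℝ := sin s * (derivative (P k)).eval (cos s) / gL m k

lemma gB_cont (k : ℕ) : Continuous (gB m P k) := by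
  have := poly_cos_cont (derivative (P k))
  unfold gB
  fun_prop

lemma gJ_gB (h : GegEq m P) (k : ℕ) (s : ℝ) :
    gJ m P (k + 1) s = sin s ^ m * gB m P (k + 1) s := by
  have h1 := gJ_eq m P h (k + 1) s
  have h2 := gL_pos m k
  unfold gB
  rw [mul_div_assoc', eq_div_iff h2.ne']
  unfold gL
  rw [mul_comm, h1]
  ring

lemma gB_orth (h : GegEq m P) (j k : ℕ) :
    ∫ s in (0:ℝ)..π, sin s ^ m * (gB m P (j + 1) s * gB m P (k + 1) s)
      = if j = k then gH m P (j + 1) / gL m (j + 1) else 0 := by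
  have h1 := geg_parts m P h (j + 1) (P (k + 1))
  have hj := (gL_pos m j).ne'
  have hk := (gL_pos m k).ne'
  have e : ∀ s, sin s ^ m * (gB m P (j + 1) s * gB m P (k + 1) s)
      = (gL m (j + 1) * gL m (k + 1))⁻¹ * (sin s ^ (m + 2) *
        ((derivative (P (j + 1))).eval (cos s) * (derivative (P (k + 1))).eval (cos s))) := by
    intro s
    unfold gB
    field_simp
    ring
  simp_rw [e]
  rw [intervalIntegral.integral_const_mul, h1]
  split_ifs with hjk
  · subst hjk
    have : gH m P (j + 1) = ∫ u in (0:ℝ)..π,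
      sin u ^ m * ((P (j + 1)).eval (cos u) * (P (j + 1)).eval (cos u)) := by
      simp only [gH, pow_two]
    rw [this]
    change _ * (gL m (j + 1) * _) = _
    field_simp
  · rw [geg_orth m P h (by omega)]; simp

/-- truncated kernel -/
noncomputable def gF (N : ℕ) (p : ℝ × ℝ) : ℝ := sin p.1 ^ m * sin p.2 ^ m *
  (∑ k ∈ Finset.range N, gB m P (k + 1) p.1 * gB m P (k + 1) p.2 / gH m P (k + 1)) ^ 2

/-- full kernel -/
noncomputable def gK (p : ℝ × ℝ) : ℝ := gG m p.1 p.2 ^ 2 / (sin p.1 ^ m * sin p.2 ^ m)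

/-- interval measure -/
noncomputable def gM : Measure ℝ := volume.restrict (Set.Ioo 0 π)

instance gM_fin : IsFiniteMeasure gM := by
  unfold gM
  infer_instance

lemma gM_integral (f : ℝ → ℝ) : ∫ x, f x ∂gM = ∫ x in (0:ℝ)..π, f x := by
  rw [intervalIntegral.integral_of_le pi_pos.le, integral_Ioc_eq_integral_Ioo]
  rfl

lemma gM_ae : ∀ᵐ p ∂(gM.prod gM), p.1 ∈ Set.Ioo 0 π ∧ p.2 ∈ Set.Ioo 0 π := by
  unfold gM
  rw [Measure.prod_restrict]
  filter_upwards [ae_restrict_mem (measurableSet_Ioo.prod measurableSet_Ioo)] with p hp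
  exact hp

lemma gF_eq (h : GegEq m P) (N : ℕ) {p : ℝ × ℝ} (hp : p.1 ∈ Set.Ioo 0 π ∧ p.2 ∈ Set.Ioo 0 π) :
    gF m P N p = (∑ k ∈ Finset.range N,
      gJ m P (k + 1) p.1 * gJ m P (k + 1) p.2 / gH m P (k + 1)) ^ 2 /
        (sin p.1 ^ m * sin p.2 ^ m) := by
  have h1 := sin_pos_of_pos_of_lt_pi hp.1.1 hp.1.2
  have h2 := sin_pos_of_pos_of_lt_pi hp.2.1 hp.2.2
  have : ∑ k ∈ Finset.range N, gJ m P (k + 1) p.1 * gJ m P (k + 1) p.2 / gH m P (k + 1)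
      = (sin p.1 ^ m * sin p.2 ^ m) *
      ∑ k ∈ Finset.range N, gB m P (k + 1) p.1 * gB m P (k + 1) p.2 / gH m P (k + 1) := by
    rw [Finset.mul_sum]
    apply Finset.sum_congr rfl
    intro k _
    rw [gJ_gB m P h, gJ_gB m P h]
    ring
  rw [this, gF]
  field_simp

lemma gF_bound (h : GegEq m P) (N : ℕ) {p : ℝ × ℝ}
    (hp : p.1 ∈ Set.Ioo 0 π ∧ p.2 ∈ Set.Ioo 0 π) : gF m P N p ≤ π ^ 2 := by
  have h1 := sin_pos_of_pos_of_lt_pi hp.1.1 hp.1.2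
  have h2 := sin_pos_of_pos_of_lt_pi hp.2.1 hp.2.2
  rw [gF_eq m P h N hp, div_le_iff₀ (by positivity)]
  have hb : ∀ s ∈ Set.Ioo 0 π, ∑ k ∈ Finset.range N,
      gJ m P (k + 1) s * gJ m P (k + 1) s / gH m P (k + 1) ≤ π * sin s ^ m := by
    intro s hs
    have hs' : s ∈ Set.Icc 0 π := ⟨hs.1.le, hs.2.le⟩
    refine (sum_le_hasSum _ ?_ (gG_hasSum m P h hs' hs')).trans (gG_diag m hs)
    intro k _
    exact div_nonneg (mul_self_nonneg _) (gH_pos m P h _).le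
  have hcs := Finset.sum_sq_le_sum_mul_sum_of_sq_le_mul (Finset.range N)
    (f := fun k => gJ m P (k + 1) p.1 * gJ m P (k + 1) p.1 / gH m P (k + 1))
    (g := fun k => gJ m P (k + 1) p.2 * gJ m P (k + 1) p.2 / gH m P (k + 1))
    (r := fun k => gJ m P (k + 1) p.1 * gJ m P (k + 1) p.2 / gH m P (k + 1))
    (fun k _ => div_nonneg (mul_self_nonneg _) (gH_pos m P h _).le)
    (fun k _ => div_nonneg (mul_self_nonneg _) (gH_pos m P h _).le)
    (fun k _ => le_of_eq (by ring))
  refine hcs.trans ?_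
  calc _ ≤ (π * sin p.1 ^ m) * (π * sin p.2 ^ m) := by
        apply mul_le_mul (hb _ hp.1) (hb _ hp.2)
        · exact Finset.sum_nonneg
            (fun k _ => div_nonneg (mul_self_nonneg _) (gH_pos m P h _).le)
        · have := pi_pos
          positivity
    _ = _ := by ring

lemma gF_nonneg (N : ℕ) {p : ℝ × ℝ}
    (hp : p.1 ∈ Set.Ioo 0 π ∧ p.2 ∈ Set.Ioo 0 π) : 0 ≤ gF m P N p := by
  have h1 := sin_pos_of_pos_of_lt_pi hp.1.1 hp.1.2
  have h2 := sin_pos_of_pos_of_lt_pi hp.2.1 hp.2.2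
  unfold gF
  positivity

lemma gF_tendsto (h : GegEq m P) {p : ℝ × ℝ} (hp : p.1 ∈ Set.Ioo 0 π ∧ p.2 ∈ Set.Ioo 0 π) :
    Tendsto (fun N => gF m P N p) atTop (nhds (gK m p)) := by
  have h1 := (gG_hasSum m P h (Set.Ioo_subset_Icc_self hp.1)
    (Set.Ioo_subset_Icc_self hp.2)).tendsto_sum_nat
  have := (h1.pow 2).div_const (sin p.1 ^ m * sin p.2 ^ m)
  refine this.congr (fun N => ?_)
  rw [gF_eq m P h N hp]

lemma gF_cont (N : ℕ) : Continuous (gF m P N) := by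
  have := gB_cont m P
  unfold gF
  fun_prop

lemma gK_meas : Measurable (gK m) := by
  have := gI_cont m
  unfold gK gG
  apply Measurable.div
  · apply Continuous.measurable
    fun_prop
  · apply Continuous.measurable
    fun_prop

lemma gK_int (h : GegEq m P) : Integrable (gK m) (gM.prod gM) := by
  apply Integrable.of_bound (gK_meas m).aestronglyMeasurable (π ^ 2)
  filter_upwards [gM_ae] with p hp
  have ht := gF_tendsto m P h hp
  rw [Real.norm_of_nonneg]
  · exact le_of_tendsto' ht (fun N => gF_bound m P h N hp)
  · exact ge_of_tendsto' ht (fun N => gF_nonneg m P N hp)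

lemma gF_integral (h : GegEq m P) (N : ℕ) :
    ∫ p, gF m P N p ∂(gM.prod gM) = ∑ k ∈ Finset.range N, (1 / gL m (k + 1)) ^ 2 := by
  have hcb : ∀ j k, Continuous (fun s => sin s ^ m * (gB m P (j + 1) s * gB m P (k + 1) s)) := by
    intro j k
    have := gB_cont m P
    fun_prop
  have hib : ∀ j k, Integrable
      (fun s => sin s ^ m * (gB m P (j + 1) s * gB m P (k + 1) s)) gM := by
    intro j k
    exact ((hcb j k).integrableOn_Icc (a := 0) (b := π)).mono_set Set.Ioo_subset_Icc_self
  have e : ∀ p, gF m P N p = ∑ j ∈ Finset.range N, ∑ k ∈ Finset.range N,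
      (gH m P (j + 1) * gH m P (k + 1))⁻¹ *
      ((sin p.1 ^ m * (gB m P (j + 1) p.1 * gB m P (k + 1) p.1)) *
      (sin p.2 ^ m * (gB m P (j + 1) p.2 * gB m P (k + 1) p.2))) := by
    intro p
    rw [gF, pow_two (Finset.sum _ _), Finset.sum_mul_sum, Finset.mul_sum]
    apply Finset.sum_congr rfl
    intro j _
    rw [Finset.mul_sum]
    apply Finset.sum_congr rfl
    intro k _
    rw [mul_inv]
    ring
  simp_rw [e]
  rw [integral_finsetSum]
  swap
  · intro j _
    apply integrable_finsetSum
    intro k _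
    exact ((hib j k).mul_prod (hib j k)).const_mul _
  apply Finset.sum_congr rfl
  intro j hj
  rw [integral_finsetSum]
  swap
  · intro k _
    exact ((hib j k).mul_prod (hib j k)).const_mul _
  have e2 : ∀ k, ∫ p : ℝ × ℝ, (gH m P (j + 1) * gH m P (k + 1))⁻¹ *
      ((sin p.1 ^ m * (gB m P (j + 1) p.1 * gB m P (k + 1) p.1)) *
      (sin p.2 ^ m * (gB m P (j + 1) p.2 * gB m P (k + 1) p.2))) ∂(gM.prod gM)
      = if j = k then (1 / gL m (j + 1)) ^ 2 else 0 := by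
    intro k
    rw [integral_const_mul, integral_prod_mul
      (fun s => sin s ^ m * (gB m P (j + 1) s * gB m P (k + 1) s))
      (fun s => sin s ^ m * (gB m P (j + 1) s * gB m P (k + 1) s)), gM_integral,
      gB_orth m P h]
    split_ifs with hjk
    · subst hjk
      have := (gH_pos m P h (j + 1)).ne'
      have := (gL_pos m j).ne'
      field_simp
    · simp
  simp_rw [e2]
  simp [Finset.mem_range.1 hj]

lemma gK_hasSum (h : GegEq m P) :
    Tendsto (fun N => ∑ k ∈ Finset.range N, (1 / gL m (k + 1)) ^ 2) atTop
      (nhds (∫ p, gK m p ∂(gM.prod gM))) := by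
  simp_rw [← gF_integral m P h]
  apply tendsto_integral_of_dominated_convergence (fun _ => π ^ 2)
  · intro N
    exact (gF_cont m P N).aestronglyMeasurable
  · exact integrable_const _
  · intro N
    filter_upwards [gM_ae] with p hp
    rw [Real.norm_of_nonneg (gF_nonneg m P N hp)]
    exact gF_bound m P h N hp
  · filter_upwards [gM_ae] with p hp
    exact gF_tendsto m P h hp

lemma gK_comm (s t : ℝ) : gK m (s, t) = gK m (t, s) := by
  simp only [gK]
  rw [gG_comm, mul_comm (sin s ^ m)]

lemma gM_tail (f : ℝ → ℝ) {u : ℝ} (hu : u ∈ Set.Ioo 0 π) :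
    ∫ s, (Set.Ioi u).indicator f s ∂gM = ∫ s in u..π, f s := by
  rw [integral_indicator measurableSet_Ioi, gM, Measure.restrict_restrict measurableSet_Ioi,
    intervalIntegral.integral_of_le hu.2.le, integral_Ioc_eq_integral_Ioo]
  congr 2
  ext x
  simp only [Set.mem_inter_iff, Set.mem_Ioi, Set.mem_Ioo]
  constructor
  · rintro ⟨a, b, c⟩; exact ⟨a, c⟩
  · rintro ⟨a, b⟩; exact ⟨a, hu.1.trans a, b⟩

lemma gM_tail' (f : ℝ → ℝ) {u : ℝ} (hu : u ∈ Set.Ioo 0 π) :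
    ∫ s, (Set.Ici u).indicator f s ∂gM = ∫ s in u..π, f s := by
  rw [← gM_tail f hu, integral_indicator measurableSet_Ioi, integral_indicator measurableSet_Ici]
  unfold gM
  rw [Measure.restrict_restrict measurableSet_Ioi, Measure.restrict_restrict measurableSet_Ici]
  apply setIntegral_congr_set
  exact (Ioi_ae_eq_Ici.symm).inter (ae_eq_refl _)

lemma gK_split (h : GegEq m P) :
    ∫ p, gK m p ∂(gM.prod gM) = 2 * ∫ u in (0:ℝ)..π, ∫ s in u..π, gK m (u, s) := by
  have hA : MeasurableSet {p : ℝ × ℝ | p.1 < p.2} := measurableSet_lt measurable_fst measurable_snd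
  have hA' : MeasurableSet {p : ℝ × ℝ | p.1 < p.2}ᶜ := hA.compl
  have hK := gK_int m P h
  rw [← integral_add_compl hA hK, ← integral_indicator hA, ← integral_indicator hA',
    integral_prod _ (hK.indicator hA), integral_prod_symm _ (hK.indicator hA'), two_mul,
    ← gM_integral]
  have haem : ∀ᵐ u ∂gM, u ∈ Set.Ioo 0 π := ae_restrict_mem measurableSet_Ioo
  congr 1
  · apply integral_congr_ae
    filter_upwards [haem] with u hu
    rw [← gM_tail _ hu]
    apply integral_congr_ae
    filter_upwards with s
    simp [Set.indicator_apply]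
  · apply integral_congr_ae
    filter_upwards [haem] with u hu
    rw [← gM_tail' _ hu]
    apply integral_congr_ae
    filter_upwards with s
    simp [Set.indicator_apply, gK_comm m s u]

lemma gV_eq (h : GegEq m P) :
    (2 / gI m π ^ 2) * ∫ u in (0:ℝ)..π, ((gI m u) ^ 2 / sin u ^ m) *
        ∫ s in u..π, (gI m π - gI m s) ^ 2 / sin s ^ m
      = ∫ p, gK m p ∂(gM.prod gM) := by
  rw [gK_split m P h, div_mul_eq_mul_div, mul_div_assoc]
  congr 1
  rw [← intervalIntegral.integral_div]
  apply intervalIntegral.integral_congr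
  intro u hu
  rw [Set.uIcc_of_le pi_pos.le] at hu
  simp only
  rw [mul_div_right_comm, ← intervalIntegral.integral_const_mul]
  apply intervalIntegral.integral_congr
  intro s hs
  rw [Set.uIcc_of_le hu.2] at hs
  simp only [gK]
  rw [gG_eq m hs.1, div_pow, mul_pow]
  simp only [div_eq_mul_inv, mul_inv]
  ring

lemma gV_tsum :
    (2 / gI m π ^ 2) * ∫ u in (0:ℝ)..π, ((gI m u) ^ 2 / sin u ^ m) *
        ∫ s in u..π, (gI m π - gI m s) ^ 2 / sin s ^ m
      = ∑' k : ℕ, (1 / gL m (k + 1)) ^ 2 := by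
  choose P hP using fun k => geg_exists k m
  have hg : GegEq m P := hP
  rw [gV_eq m P hg]
  symm
  exact ((hasSum_iff_tendsto_nat_of_nonneg (fun k => by positivity) _).2
    (gK_hasSum m P hg)).tsum_eq

end Main

lemma gV_limit : Tendsto (fun m : ℕ => (m : ℝ) ^ 2 * ∑' k : ℕ, (1 / gL m (k + 1)) ^ 2) atTop
    (nhds (π ^ 2 / 6)) := by
  have hz : HasSum (fun k : ℕ => 1 / ((k : ℝ) + 1) ^ 2) (π ^ 2 / 6) := by
    have := (hasSum_nat_add_iff' 1).2 hasSum_zeta_two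
    simpa using this
  rw [← hz.tsum_eq]
  simp_rw [← tsum_mul_left]
  apply tendsto_tsum_of_dominated_convergence hz.summable
  · intro k
    have h1 : Tendsto (fun m : ℕ => (m : ℝ) / (m + (k + 1))) atTop (nhds 1) :=
      tendsto_natCast_div_add_atTop ((k : ℝ) + 1)
    have h2 := (h1.pow 2).mul_const (1 / ((k : ℝ) + 1) ^ 2)
    simp only [one_pow, one_mul] at h2
    refine h2.congr (fun m => ?_)
    unfold gL
    push_cast
    have : (0:ℝ) < m + (k + 1) := by positivity
    field_simp
    ring
  · filter_upwards with m k
    rw [Real.norm_of_nonneg (by positivity)]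
    unfold gL
    push_cast
    have : ((m : ℝ) / (k + 1 + m)) ^ 2 ≤ 1 := by
      apply pow_le_one₀ (by positivity)
      rw [div_le_one (by positivity)]
      have : (0:ℝ) ≤ k := by positivity
      linarith
    calc _ = ((m : ℝ) / (k + 1 + m)) ^ 2 * (1 / ((k : ℝ) + 1) ^ 2) := by
          field_simp
      _ ≤ 1 * (1 / ((k : ℝ) + 1) ^ 2) := by gcongr
      _ = _ := one_mul _

theorem sphere_variance_asymptotics
    (I : ℕ → ℝ → ℝ) (hI : ∀ n x, I n x = ∫ s in (0:ℝ)..x, Real.sin s ^ (n - 1))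
    (W : ℕ → ℝ) (hW : ∀ n, W n = ∫ s in (0:ℝ)..(π/2), Real.sin s ^ (n - 1))
    (V : ℕ → ℝ)
    (hV : ∀ n : ℕ, 2 ≤ n → V n = (2 / (2 * W n)^2) *
      ∫ u in (0:ℝ)..π, ((I n u)^2 / Real.sin u ^ (n - 1)) *
        ∫ s in u..π, (2 * W n - I n s)^2 / Real.sin s ^ (n - 1)) :
    Tendsto (fun n : ℕ => ((n:ℝ) - 1)^2 * V n) atTop (nhds (π^2 / 6)) := by
  rw [← tendsto_add_atTop_iff_nat 1]
  refine gV_limit.congr' ?_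
  filter_upwards [eventually_ge_atTop 1] with m hm
  have hI' : ∀ x, I (m + 1) x = gI m x := fun x => by rw [hI]; rfl
  have hW' : 2 * W (m + 1) = gI m π := by rw [gI_half, hW]; rfl
  rw [hV (m + 1) (by omega)]
  simp only [hI', hW', Nat.add_sub_cancel]
  rw [gV_tsum]
  push_cast
  ring
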